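/- Assume N ≥ 2. For all u₁, u₂ ∈ ℝ^N with u₁ᵀ𝟙 = u₂ᵀ𝟙 = 0, one has u₁ᵀL₁u₁ + u₂ᵀL₂u₂ ≥ (1/2) · min{λ₂(L₁), λ₂(L₂)} · ‖u₁ + u₂‖². Consequently, for every budget c with 0 ≤ c ≤ (N/2) · min{λ₂(L₁), λ₂(L₂)}, the uniform weights w = (c/N)𝟙 satisfy λ₂(L(w)) = 2c/N (i.e., the threshold budget c* is at least (N/2)·min{λ₂(L₁), λ₂(L₂)}, and in particular is strictly positive when both layers are connected). -/

import Mathlib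

open Matrix

/-- The supra-Laplacian of a two-layer multiplex with layer Laplacians `L₁`, `L₂`
and one-to-one inter-layer weights `w`: the block matrix
`[[L₁ + W, −W], [−W, L₂ + W]]` with `W = diag w`. -/
noncomputable def supraLaplacian {N : ℕ} (L₁ L₂ : Matrix (Fin N) (Fin N) ℝ)
    (w : Fin N → ℝ) : Matrix (Fin N ⊕ Fin N) (Fin N ⊕ Fin N) ℝ :=
  Matrix.fromBlocks (L₁ + Matrix.diagonal w) (-Matrix.diagonal w)
    (-Matrix.diagonal w) (L₂ + Matrix.diagonal w)

/-- Algebraic connectivity: the minimum of `vᵀ M v` over unit vectors `v`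
orthogonal to the all-ones vector (the minimum is attained, so it equals the inf). -/
noncomputable def lambda2 {n : Type*} [Fintype n] (M : Matrix n n ℝ) : ℝ :=
  sInf {x : ℝ | ∃ v : n → ℝ, v ⬝ᵥ v = 1 ∧ v ⬝ᵥ (fun _ => 1) = 0 ∧ x = v ⬝ᵥ M *ᵥ v}

/-! Along antisymmetric vectors `(t, -t)` with `t` constant only the coupling contributes, which
gives the Rayleigh quotient `2a` when all weights equal `a`. It is the minimum as long as the layers
are stiff enough: for `(x, y) ⊥ 𝟙` the coupling energy is `a‖x - y‖²`, while the layer energies are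
insensitive to shifting `x` and `y` by the opposite constants that make them mean-free, and hence
dominate `½ min(λ₂(L₁), λ₂(L₂)) ‖x + y‖² ≥ a‖x + y‖²`. The parallelogram law adds the two up to
`2a(‖x‖² + ‖y‖²)`. -/

section DotProduct

variable {n R : Type*} [Fintype n]

lemma dotProduct_self_nonneg [Ring R] [LinearOrder R] [IsStrictOrderedRing R] (v : n → R) :
    0 ≤ v ⬝ᵥ v :=
  Finset.sum_nonneg fun i _ => mul_self_nonneg (v i)

lemma dotProduct_self_pos [Ring R] [LinearOrder R] [IsStrictOrderedRing R] {v : n → R}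
    (hv : v ≠ 0) : 0 < v ⬝ᵥ v :=
  (dotProduct_self_nonneg v).lt_of_ne' (dotProduct_self_eq_zero.not.mpr hv)

lemma dotProduct_add_self_add_dotProduct_sub_self [NonUnitalNonAssocRing R] (u v : n → R) :
    (u + v) ⬝ᵥ (u + v) + (u - v) ⬝ᵥ (u - v) = 2 • (u ⬝ᵥ u + v ⬝ᵥ v) := by
  simp only [add_dotProduct, dotProduct_add, sub_dotProduct, dotProduct_sub]
  abel

lemma dotProduct_mulVec_add_smul_of_mulVec_eq_zero [CommRing R] {L : Matrix n n R}
    (hL : L.IsSymm) {k : n → R} (hk : L *ᵥ k = 0) (x : n → R) (s : R) :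
    (x + s • k) ⬝ᵥ L *ᵥ (x + s • k) = x ⬝ᵥ L *ᵥ x := by
  have hkL : k ᵥ* L = 0 := by rw [← mulVec_transpose, hL.eq, hk]
  rw [mulVec_add, mulVec_smul, hk, smul_zero, add_zero, add_dotProduct, smul_dotProduct,
    dotProduct_mulVec k, hkL, zero_dotProduct, smul_zero, add_zero]

lemma sumElim_dotProduct_fromBlocks_mulVec_sumElim [NonUnitalNonAssocRing R] (A B D : Matrix n n R)
    (x y : n → R) :
    Sum.elim x y ⬝ᵥ fromBlocks (A + D) (-D) (-D) (B + D) *ᵥ Sum.elim x y =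
      x ⬝ᵥ A *ᵥ x + y ⬝ᵥ B *ᵥ y + (x - y) ⬝ᵥ D *ᵥ (x - y) := by
  simp only [fromBlocks_mulVec, sumElim_dotProduct_sumElim, Sum.elim_comp_inl, Sum.elim_comp_inr,
    add_mulVec, neg_mulVec, mulVec_sub, dotProduct_add, dotProduct_neg, sub_dotProduct,
    dotProduct_sub]
  abel

end DotProduct

section Rayleigh

variable {n : Type*} [Fintype n] {L : Matrix n n ℝ}

lemma lambda2_eq_sInf_rayleigh (M : Matrix n n ℝ) :
    lambda2 M = sInf {r : ℝ | ∃ v : n → ℝ, v ≠ 0 ∧ v ⬝ᵥ 1 = 0 ∧ r = (v ⬝ᵥ M *ᵥ v) / (v ⬝ᵥ v)} := by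
  refine congrArg sInf (Set.ext fun r => ⟨?_, ?_⟩)
  · rintro ⟨v, hunit, horth, rfl⟩
    have hv : v ≠ 0 := by rintro rfl; simp at hunit
    exact ⟨v, hv, horth, by rw [hunit, div_one]⟩
  · rintro ⟨v, hv, horth, rfl⟩
    have hpos : 0 < v ⬝ᵥ v := dotProduct_self_pos hv
    have hsq : (√(v ⬝ᵥ v))⁻¹ * (√(v ⬝ᵥ v))⁻¹ = (v ⬝ᵥ v)⁻¹ := by
      rw [← mul_inv, Real.mul_self_sqrt hpos.le]
    refine ⟨(√(v ⬝ᵥ v))⁻¹ • v, ?_, ?_, ?_⟩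
    · rw [smul_dotProduct, dotProduct_smul, smul_smul, hsq, smul_eq_mul, inv_mul_cancel₀ hpos.ne']
    · rw [smul_dotProduct]
      exact smul_eq_zero_of_right _ horth
    · rw [mulVec_smul, smul_dotProduct, dotProduct_smul, smul_smul, hsq, smul_eq_mul,
        div_eq_inv_mul]

lemma lambda2_eq_of_forall_mul_dotProduct_self_le {r : ℝ} {v : n → ℝ} (hv : v ≠ 0)
    (horth : v ⬝ᵥ 1 = 0) (hval : v ⬝ᵥ L *ᵥ v = r * (v ⬝ᵥ v))
    (hle : ∀ u : n → ℝ, u ⬝ᵥ 1 = 0 → r * (u ⬝ᵥ u) ≤ u ⬝ᵥ L *ᵥ u) : lambda2 L = r := by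
  rw [lambda2_eq_sInf_rayleigh]
  refine IsLeast.csInf_eq ⟨⟨v, hv, horth, ?_⟩, ?_⟩
  · rw [hval, mul_div_cancel_right₀ _ (dotProduct_self_pos hv).ne']
  · rintro _ ⟨u, hu, huorth, rfl⟩
    have hpos : 0 < u ⬝ᵥ u := dotProduct_self_pos hu
    exact (le_div_iff₀ hpos).mpr (hle u huorth)

lemma dotProduct_mulVec_self_nonneg_of_posSemidef (hL : L.PosSemidef) (v : n → ℝ) :
    0 ≤ v ⬝ᵥ L *ᵥ v := by
  simpa only [star_trivial] using hL.dotProduct_mulVec_nonneg v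

lemma lambda2_nonneg (hL : L.PosSemidef) : 0 ≤ lambda2 L := by
  refine Real.sInf_nonneg ?_
  rintro _ ⟨v, -, -, rfl⟩
  exact dotProduct_mulVec_self_nonneg_of_posSemidef hL v

lemma lambda2_mul_dotProduct_self_le (hL : L.PosSemidef) {v : n → ℝ} (hv : v ⬝ᵥ 1 = 0) :
    lambda2 L * (v ⬝ᵥ v) ≤ v ⬝ᵥ L *ᵥ v := by
  rcases eq_or_ne v 0 with rfl | hne
  · simp
  have hpos : 0 < v ⬝ᵥ v := dotProduct_self_pos hne
  rw [← le_div_iff₀ hpos, lambda2_eq_sInf_rayleigh]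
  refine csInf_le ⟨0, ?_⟩ ⟨v, hne, hv, rfl⟩
  rintro _ ⟨u, -, -, rfl⟩
  exact div_nonneg (dotProduct_mulVec_self_nonneg_of_posSemidef hL u) (dotProduct_self_nonneg u)

end Rayleigh

section TwoLayers

variable {n : Type*} [Fintype n] {L₁ L₂ : Matrix n n ℝ}

lemma half_min_lambda2_mul_le (hL₁ : L₁.PosSemidef) (hL₂ : L₂.PosSemidef) {u₁ u₂ : n → ℝ}
    (h₁ : u₁ ⬝ᵥ 1 = 0) (h₂ : u₂ ⬝ᵥ 1 = 0) :
    1 / 2 * min (lambda2 L₁) (lambda2 L₂) * ((u₁ + u₂) ⬝ᵥ (u₁ + u₂)) ≤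
      u₁ ⬝ᵥ L₁ *ᵥ u₁ + u₂ ⬝ᵥ L₂ *ᵥ u₂ := by
  set m := min (lambda2 L₁) (lambda2 L₂)
  have hm : 0 ≤ m := le_min (lambda2_nonneg hL₁) (lambda2_nonneg hL₂)
  have hsum : (u₁ + u₂) ⬝ᵥ (u₁ + u₂) ≤ 2 * (u₁ ⬝ᵥ u₁ + u₂ ⬝ᵥ u₂) := by
    rw [two_mul, ← two_nsmul, ← dotProduct_add_self_add_dotProduct_sub_self]
    exact le_add_of_nonneg_right (dotProduct_self_nonneg _)
  calc 1 / 2 * m * ((u₁ + u₂) ⬝ᵥ (u₁ + u₂))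
      ≤ 1 / 2 * m * (2 * (u₁ ⬝ᵥ u₁ + u₂ ⬝ᵥ u₂)) := by gcongr
    _ = m * (u₁ ⬝ᵥ u₁) + m * (u₂ ⬝ᵥ u₂) := by ring
    _ ≤ lambda2 L₁ * (u₁ ⬝ᵥ u₁) + lambda2 L₂ * (u₂ ⬝ᵥ u₂) := by
        gcongr
        exacts [dotProduct_self_nonneg _, min_le_left _ _, dotProduct_self_nonneg _,
          min_le_right _ _]
    _ ≤ u₁ ⬝ᵥ L₁ *ᵥ u₁ + u₂ ⬝ᵥ L₂ *ᵥ u₂ :=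
        add_le_add (lambda2_mul_dotProduct_self_le hL₁ h₁) (lambda2_mul_dotProduct_self_le hL₂ h₂)

variable [Nonempty n]

lemma half_min_lambda2_mul_le_of_dotProduct_one_add_eq_zero
    (hL₁ : L₁.PosSemidef) (hL₂ : L₂.PosSemidef) (hL₁1 : L₁ *ᵥ 1 = 0) (hL₂1 : L₂ *ᵥ 1 = 0)
    {x y : n → ℝ} (h : x ⬝ᵥ 1 + y ⬝ᵥ 1 = 0) :
    1 / 2 * min (lambda2 L₁) (lambda2 L₂) * ((x + y) ⬝ᵥ (x + y)) ≤
      x ⬝ᵥ L₁ *ᵥ x + y ⬝ᵥ L₂ *ᵥ y := by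
  obtain ⟨s, hs⟩ : ∃ s : ℝ, s * Fintype.card n = y ⬝ᵥ 1 :=
    ⟨y ⬝ᵥ 1 / Fintype.card n, div_mul_cancel₀ _ (Nat.cast_ne_zero.mpr Fintype.card_ne_zero)⟩
  have hone : (1 : n → ℝ) ⬝ᵥ 1 = Fintype.card n := one_dotProduct_one
  have hx : (x + s • 1) ⬝ᵥ 1 = 0 := by
    rw [add_dotProduct, smul_dotProduct, hone, smul_eq_mul, hs, h]
  have hy : (y + (-s) • 1) ⬝ᵥ 1 = 0 := by
    rw [add_dotProduct, smul_dotProduct, hone, smul_eq_mul, neg_mul, hs, add_neg_cancel]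
  have hadd : x + s • 1 + (y + (-s) • 1) = x + y := by rw [neg_smul]; abel
  have hbound := half_min_lambda2_mul_le hL₁ hL₂ hx hy
  rwa [hadd, dotProduct_mulVec_add_smul_of_mulVec_eq_zero (isHermitian_iff_isSymm.mp hL₁.1) hL₁1,
    dotProduct_mulVec_add_smul_of_mulVec_eq_zero (isHermitian_iff_isSymm.mp hL₂.1) hL₂1] at hbound

variable [DecidableEq n]

lemma two_mul_mul_dotProduct_self_le_fromBlocks
    (hL₁ : L₁.PosSemidef) (hL₂ : L₂.PosSemidef) (hL₁1 : L₁ *ᵥ 1 = 0) (hL₂1 : L₂ *ᵥ 1 = 0)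
    {a : ℝ} (ha : a ≤ 1 / 2 * min (lambda2 L₁) (lambda2 L₂))
    {v : n ⊕ n → ℝ} (hv : v ⬝ᵥ 1 = 0) :
    2 * a * (v ⬝ᵥ v) ≤
      v ⬝ᵥ fromBlocks (L₁ + diagonal fun _ => a) (-diagonal fun _ => a)
        (-diagonal fun _ => a) (L₂ + diagonal fun _ => a) *ᵥ v := by
  obtain ⟨x, y, rfl⟩ : ∃ x y : n → ℝ, v = Sum.elim x y :=
    ⟨v ∘ Sum.inl, v ∘ Sum.inr, (Sum.elim_comp_inl_inr v).symm⟩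
  have hxy : x ⬝ᵥ 1 + y ⬝ᵥ 1 = 0 := by
    rwa [← Sum.elim_one_one, sumElim_dotProduct_sumElim] at hv
  rw [sumElim_dotProduct_fromBlocks_mulVec_sumElim, sumElim_dotProduct_sumElim,
    diagonal_const_mulVec, dotProduct_smul, smul_eq_mul]
  calc 2 * a * (x ⬝ᵥ x + y ⬝ᵥ y)
      = a * ((x + y) ⬝ᵥ (x + y) + (x - y) ⬝ᵥ (x - y)) := by
        rw [dotProduct_add_self_add_dotProduct_sub_self, nsmul_eq_mul]; push_cast; ring
    _ = a * ((x + y) ⬝ᵥ (x + y)) + a * ((x - y) ⬝ᵥ (x - y)) := mul_add _ _ _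
    _ ≤ x ⬝ᵥ L₁ *ᵥ x + y ⬝ᵥ L₂ *ᵥ y + a * ((x - y) ⬝ᵥ (x - y)) := by
        gcongr
        exact (mul_le_mul_of_nonneg_right ha (dotProduct_self_nonneg _)).trans
          (half_min_lambda2_mul_le_of_dotProduct_one_add_eq_zero hL₁ hL₂ hL₁1 hL₂1 hxy)

lemma lambda2_fromBlocks_diagonal_const
    (hL₁ : L₁.PosSemidef) (hL₂ : L₂.PosSemidef) (hL₁1 : L₁ *ᵥ 1 = 0) (hL₂1 : L₂ *ᵥ 1 = 0)
    {a : ℝ} (ha : a ≤ 1 / 2 * min (lambda2 L₁) (lambda2 L₂)) :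
    lambda2 (fromBlocks (L₁ + diagonal fun _ => a) (-diagonal fun _ => a)
      (-diagonal fun _ => a) (L₂ + diagonal fun _ => a)) = 2 * a := by
  refine lambda2_eq_of_forall_mul_dotProduct_self_le (v := Sum.elim 1 (-1)) ?_ ?_ ?_
    fun _ => two_mul_mul_dotProduct_self_le_fromBlocks hL₁ hL₂ hL₁1 hL₂1 ha
  · intro h
    simpa using congrFun h (Sum.inl (Classical.arbitrary n))
  · rw [← Sum.elim_one_one, sumElim_dotProduct_sumElim, neg_dotProduct, add_neg_cancel]
  · rw [sumElim_dotProduct_fromBlocks_mulVec_sumElim, sumElim_dotProduct_sumElim, mulVec_neg,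
      hL₁1, hL₂1, diagonal_const_mulVec]
    simp only [dotProduct_zero, neg_zero, sub_neg_eq_add, add_dotProduct, dotProduct_add,
      dotProduct_smul, neg_dotProduct_neg, smul_eq_mul]
    ring

end TwoLayers

theorem stmt8_general {n : Type*} [Fintype n] [DecidableEq n] [Nontrivial n]
    {L₁ L₂ : Matrix n n ℝ} (hL₁ : L₁.PosSemidef) (hL₂ : L₂.PosSemidef)
    (hL₁1 : L₁ *ᵥ 1 = 0) (hL₂1 : L₂ *ᵥ 1 = 0) :
    (∀ u₁ u₂ : n → ℝ, u₁ ⬝ᵥ 1 = 0 → u₂ ⬝ᵥ 1 = 0 →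
      1 / 2 * min (lambda2 L₁) (lambda2 L₂) * ((u₁ + u₂) ⬝ᵥ (u₁ + u₂)) ≤
        u₁ ⬝ᵥ L₁ *ᵥ u₁ + u₂ ⬝ᵥ L₂ *ᵥ u₂) ∧
    (∀ c : ℝ, c ≤ Fintype.card n / 2 * min (lambda2 L₁) (lambda2 L₂) →
      lambda2 (fromBlocks (L₁ + diagonal fun _ => c / Fintype.card n)
        (-diagonal fun _ => c / Fintype.card n) (-diagonal fun _ => c / Fintype.card n)
        (L₂ + diagonal fun _ => c / Fintype.card n)) = 2 * c / Fintype.card n) := by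
  refine ⟨fun _ _ => half_min_lambda2_mul_le hL₁ hL₂, fun c hc => ?_⟩
  have hcard : (0 : ℝ) < Fintype.card n := Nat.cast_pos.mpr Fintype.card_pos
  have ha : c / Fintype.card n ≤ 1 / 2 * min (lambda2 L₁) (lambda2 L₂) := by
    rw [div_le_iff₀ hcard]
    linarith
  rw [lambda2_fromBlocks_diagonal_const hL₁ hL₂ hL₁1 hL₂1 ha, mul_div_assoc]

theorem stmt8 {N : ℕ} (hN : 2 ≤ N)
    (L₁ L₂ : Matrix (Fin N) (Fin N) ℝ)
    (hL₁ : L₁.PosSemidef) (hL₂ : L₂.PosSemidef)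
    (hL₁1 : L₁ *ᵥ (fun _ => 1) = 0) (hL₂1 : L₂ *ᵥ (fun _ => 1) = 0) :
    (∀ u₁ u₂ : Fin N → ℝ, u₁ ⬝ᵥ (fun _ => 1) = 0 → u₂ ⬝ᵥ (fun _ => 1) = 0 →
      u₁ ⬝ᵥ L₁ *ᵥ u₁ + u₂ ⬝ᵥ L₂ *ᵥ u₂ ≥
        (1 / 2) * min (lambda2 L₁) (lambda2 L₂) * ((u₁ + u₂) ⬝ᵥ (u₁ + u₂))) ∧
    (∀ c : ℝ, 0 ≤ c → c ≤ (N / 2) * min (lambda2 L₁) (lambda2 L₂) →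
      lambda2 (supraLaplacian L₁ L₂ (fun _ => c / N)) = 2 * c / N) := by
  have : Nontrivial (Fin N) := Fin.nontrivial_iff_two_le.mpr hN
  have ⟨h₁, h₂⟩ := stmt8_general hL₁ hL₂ hL₁1 hL₂1
  exact ⟨h₁, fun c _ hc => by simpa [supraLaplacian] using h₂ c (by simpa using hc)⟩
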